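/- If f̂ ∈ L^∞(ℝ^n) and φ(z) = e^{z²/4} ∫ f̂(ξ) e^{-|ξ|²} e^{iz·ξ} dξ, then for every t with 0 ≤ t < 1/2 the integral ∫_{ℂ^n} |φ(x+iy)|² e^{-(|x|²+|y|²)/2} e^{(2t/(1+2t))|y|²} dx dy is finite. -/

import Mathlib

open MeasureTheory Complex

/-! Put `h(ξ) = f̂(ξ) e^{-|ξ|²}` and `H(z) = ∫ h(ξ) e^{i z·ξ} dξ`. Since
`|e^{z²/4}|² = e^{(|x|²-|y|²)/2}`, the integrand of the theorem is `|H(x+iy)|² e^{-b|y|²}` with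
`b = 1/(1+2t)`. Plancherel on the horizontal slice `Im z = y` gives
`∫ |H(x+iy)|² dx = (2π)^n ∫ |h(ξ)|² e^{-2y·ξ} dξ`; integrating against `e^{-b|y|²}` and exchanging
the two integrals turns `e^{-2y·ξ}` into `(π/b)^{n/2} e^{|ξ|²/b}`. As `1/b - 2 = -(1-2t)`, the
integral equals a constant times `∫ |f̂(ξ)|² e^{-(1-2t)|ξ|²} dξ`. -/

open scoped FourierTransform ContDiff SchwartzMap

section Plancherel

variable {E F : Type*} [NormedAddCommGroup E] [InnerProductSpace ℝ E] [FiniteDimensional ℝ E]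
  [MeasurableSpace E] [BorelSpace E]
  [NormedAddCommGroup F] [InnerProductSpace ℂ F] [CompleteSpace F]

theorem integral_schwartz_smul_fourier_toLp {f : E → F} (hf : Integrable f) (hf₂ : MemLp f 2)
    (g : 𝓢(E, ℂ)) :
    ∫ w, g w • (𝓕 (hf₂.toLp f) : Lp F 2 (volume : Measure E)) w = ∫ w, g w • 𝓕 f w :=
  calc ∫ w, g w • (𝓕 (hf₂.toLp f) : Lp F 2 (volume : Measure E)) w
    _ = 𝓕 (Lp.toTemperedDistribution (hf₂.toLp f)) g := by
        rw [Lp.fourier_toTemperedDistribution_eq, Lp.toTemperedDistribution_apply]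
    _ = ∫ v, 𝓕 (g : E → ℂ) v • f v := by
        rw [TemperedDistribution.fourier_apply, Lp.toTemperedDistribution_apply]
        refine integral_congr_ae ?_
        filter_upwards [hf₂.coeFn_toLp] with v hv
        rw [hv, SchwartzMap.fourier_coe]
    _ = ∫ w, g w • 𝓕 f w := by
        have := VectorFourier.integral_fourierIntegral_smul_eq_flip (L := innerₗ E)
          (μ := volume) (ν := volume)
          Real.continuous_fourierChar continuous_inner g.integrable hf
        rwa [flip_innerₗ] at this

theorem fourier_toLp_ae_eq {f : E → F} (hf : Integrable f) (hf₂ : MemLp f 2) :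
    (𝓕 (hf₂.toLp f) : Lp F 2 (volume : Measure E)) =ᵐ[volume] 𝓕 f := by
  have hcont : Continuous (𝓕 f) :=
    VectorFourier.fourierIntegral_continuous Real.continuous_fourierChar continuous_inner hf
  refine ae_eq_of_integral_contDiff_smul_eq ((Lp.memLp _).locallyIntegrable one_le_two)
    hcont.locallyIntegrable fun g hg hg_supp ↦ ?_
  have hc_supp : HasCompactSupport (ofRealCLM ∘ g) := hg_supp.comp_left rfl
  have hc : ContDiff ℝ ∞ (ofRealCLM ∘ g) := by fun_prop
  simpa using integral_schwartz_smul_fourier_toLp hf hf₂ (hc_supp.toSchwartzMap hc)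

theorem lintegral_enorm_fourier_sq {f : E → F} (hf : Integrable f) (hf₂ : MemLp f 2) :
    ∫⁻ w, ‖𝓕 f w‖ₑ ^ 2 = ∫⁻ v, ‖f v‖ₑ ^ 2 := by
  have h : eLpNorm (𝓕 f) 2 = eLpNorm f 2 := by
    rw [← eLpNorm_congr_ae (fourier_toLp_ae_eq hf hf₂), ← Lp.enorm_def,
      ← ofReal_norm, Lp.norm_fourier_eq, ofReal_norm, Lp.enorm_toLp]
  have h_sq := congrArg (· ^ (2 : ℝ)) h
  have eLpNorm_two_sq (g : E → F) : eLpNorm g 2 volume ^ (2 : ℝ) = ∫⁻ v, ‖g v‖ₑ ^ (2 : ℝ) :=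
    eLpNorm_nnreal_pow_eq_lintegral two_ne_zero
  simpa only [eLpNorm_two_sq, ENNReal.rpow_two] using h_sq

end Plancherel

theorem lintegral_comp_const_smul {E : Type*} [NormedAddCommGroup E] [NormedSpace ℝ E]
    [FiniteDimensional ℝ E] [MeasurableSpace E] [BorelSpace E] (μ : Measure E)
    [μ.IsAddHaarMeasure] (f : E → ENNReal) {r : ℝ} (hr : r ≠ 0) :
    ∫⁻ x, f (r • x) ∂μ = ENNReal.ofReal |(r ^ Module.finrank ℝ E)⁻¹| * ∫⁻ x, f x ∂μ := by
  calc ∫⁻ x, f (r • x) ∂μ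
    _ = ∫⁻ x, f x ∂μ.map (r • ·) :=
        ((Homeomorph.smulOfNeZero r hr).measurableEmbedding.lintegral_map f).symm
    _ = ENNReal.ofReal |(r ^ Module.finrank ℝ E)⁻¹| * ∫⁻ x, f x ∂μ := by
        rw [Measure.map_addHaar_smul μ hr, lintegral_smul_measure, smul_eq_mul]

theorem enorm_mul_ofReal_exp_sq (w : ℂ) (s : ℝ) :
    ‖w * (Real.exp s : ℂ)‖ₑ ^ 2 = ‖w‖ₑ ^ 2 * ENNReal.ofReal (Real.exp (2 * s)) := by
  rw [enorm_mul, mul_pow, ← ofReal_norm (Real.exp s : ℂ), norm_real,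
    Real.norm_of_nonneg (Real.exp_pos s).le, ← ENNReal.ofReal_pow (Real.exp_pos s).le,
    ← Real.exp_nat_mul, Nat.cast_two]

theorem aestronglyMeasurable_of_mul_continuous_ne_zero {X : Type*} [TopologicalSpace X]
    [MeasurableSpace X] [OpensMeasurableSpace X] {μ : Measure X}
    {f g : X → ℂ} (hfg : AEStronglyMeasurable (fun x ↦ f x * g x) μ) (hg : Continuous g)
    (hg₀ : ∀ x, g x ≠ 0) : AEStronglyMeasurable f μ := by
  have h_inv : Continuous fun x ↦ (g x)⁻¹ := hg.inv₀ hg₀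
  refine (hfg.mul h_inv.aestronglyMeasurable).congr (.of_forall fun x ↦ ?_)
  exact mul_inv_cancel_right₀ (hg₀ x) (f x)

section Gaussian

variable {ι : Type*} [Fintype ι]

theorem integrable_exp_neg_mul_sum_sq_add {b : ℝ} (hb : 0 < b) (c : ι → ℝ) :
    Integrable fun v : ι → ℝ ↦ Real.exp (-b * ∑ j, v j ^ 2 + ∑ j, c j * v j) := by
  have hb' : 0 < (b : ℂ).re := hb
  convert (GaussianFourier.integrable_cexp_neg_mul_sum_add hb' (fun j ↦ (c j : ℂ))).re using 2
  rw [RCLike.re_eq_complex_re, ← Complex.ofReal_re (Real.exp _)]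
  push_cast
  rfl

theorem integral_exp_neg_mul_sum_sq_add {b : ℝ} (hb : 0 < b) (c : ι → ℝ) :
    ∫ v : ι → ℝ, Real.exp (-b * ∑ j, v j ^ 2 + ∑ j, c j * v j) =
      (Real.pi / b) ^ (Fintype.card ι / 2 : ℝ) * Real.exp ((∑ j, c j ^ 2) / (4 * b)) := by
  have hb' : 0 < (b : ℂ).re := hb
  have h := GaussianFourier.integral_cexp_neg_mul_sum_add hb' (fun j ↦ (c j : ℂ))
  apply Complex.ofReal_injective
  rw [← integral_complex_ofReal]
  push_cast [Complex.ofReal_cpow (show 0 ≤ Real.pi / b by positivity)]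
  exact h

theorem lintegral_exp_neg_mul_sum_sq_add {b : ℝ} (hb : 0 < b) (c : ι → ℝ) :
    ∫⁻ v : ι → ℝ, ENNReal.ofReal (Real.exp (-b * ∑ j, v j ^ 2 + ∑ j, c j * v j)) =
      ENNReal.ofReal ((Real.pi / b) ^ (Fintype.card ι / 2 : ℝ)) *
        ENNReal.ofReal (Real.exp ((∑ j, c j ^ 2) / (4 * b))) := by
  rw [← ofReal_integral_eq_lintegral_ofReal (integrable_exp_neg_mul_sum_sq_add hb c)
    (.of_forall fun _ ↦ (Real.exp_pos _).le), integral_exp_neg_mul_sum_sq_add hb,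
    ENNReal.ofReal_mul (by positivity)]

theorem memLp_two_exp_neg_mul_sum_sq_add {b : ℝ} (hb : 0 < b) (c : ι → ℝ) :
    MemLp (fun v : ι → ℝ ↦ Real.exp (-b * ∑ j, v j ^ 2 + ∑ j, c j * v j)) 2 := by
  refine (memLp_two_iff_integrable_sq (by fun_prop)).2 ?_
  convert integrable_exp_neg_mul_sum_sq_add (mul_pos two_pos hb) (fun j ↦ 2 * c j) using 2 with v
  simp only [← Real.exp_nat_mul, Nat.cast_two, mul_assoc, ← Finset.mul_sum]
  ring_nf

theorem neg_mul_sum_sq_add_le {b : ℝ} (hb : 0 < b) (c v : ι → ℝ) :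
    -b * ∑ j, v j ^ 2 + ∑ j, c j * v j ≤ (∑ j, c j ^ 2) / (4 * b) := by
  rw [Finset.mul_sum, ← Finset.sum_add_distrib, Finset.sum_div]
  refine Finset.sum_le_sum fun j _ ↦ (le_div_iff₀ (by positivity)).2 ?_
  linarith [sq_nonneg (c j - 2 * b * v j)]

theorem memLp_top_exp_neg_mul_sum_sq_add {b : ℝ} (hb : 0 < b) (c : ι → ℝ) :
    MemLp (fun v : ι → ℝ ↦ Real.exp (-b * ∑ j, v j ^ 2 + ∑ j, c j * v j)) ⊤ := by
  refine memLp_top_of_bound (by fun_prop) (Real.exp ((∑ j, c j ^ 2) / (4 * b)))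
    (.of_forall fun v ↦ ?_)
  rw [Real.norm_of_nonneg (Real.exp_pos _).le, Real.exp_le_exp]
  exact neg_mul_sum_sq_add_le hb c v

theorem mul_exp_sum_eq_gaussian_mul (h : (ι → ℝ) → ℂ) (a : ℝ) (c : ι → ℝ) :
    (fun ξ ↦ h ξ * (Real.exp (∑ j, c j * ξ j) : ℂ)) = fun ξ ↦
      h ξ * (Real.exp (a * ∑ j, ξ j ^ 2) : ℂ) *
        (Real.exp (-a * ∑ j, ξ j ^ 2 + ∑ j, c j * ξ j) : ℂ) := by
  ext ξ
  rw [mul_assoc, ← ofReal_mul, ← Real.exp_add]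
  ring_nf

variable {h : (ι → ℝ) → ℂ} {a : ℝ}

theorem integrable_mul_exp_sum (ha : 0 < a)
    (hh : MemLp (fun ξ ↦ h ξ * (Real.exp (a * ∑ j, ξ j ^ 2) : ℂ)) 2) (c : ι → ℝ) :
    Integrable fun ξ ↦ h ξ * (Real.exp (∑ j, c j * ξ j) : ℂ) := by
  rw [mul_exp_sum_eq_gaussian_mul h a]
  exact hh.integrable_mul (memLp_two_exp_neg_mul_sum_sq_add ha c).ofReal

theorem memLp_two_mul_exp_sum (ha : 0 < a)
    (hh : MemLp (fun ξ ↦ h ξ * (Real.exp (a * ∑ j, ξ j ^ 2) : ℂ)) 2) (c : ι → ℝ) :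
    MemLp (fun ξ ↦ h ξ * (Real.exp (∑ j, c j * ξ j) : ℂ)) 2 := by
  rw [mul_exp_sum_eq_gaussian_mul h a]
  exact (memLp_top_exp_neg_mul_sum_sq_add ha c).ofReal.mul' hh

theorem memLp_two_mul_gaussian (hh : MemLp h ⊤) (ha : 0 < a) :
    MemLp (fun ξ ↦ h ξ * (Real.exp (-a * ∑ j, ξ j ^ 2) : ℂ)) 2 := by
  have h_gauss := memLp_two_exp_neg_mul_sum_sq_add ha (0 : ι → ℝ)
  simp only [Pi.zero_apply, zero_mul, Finset.sum_const_zero, add_zero] at h_gauss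
  exact h_gauss.ofReal.mul' hh

end Gaussian

section FourierLaplace

variable {ι : Type*} [Fintype ι] {h : (ι → ℝ) → ℂ} {b : ℝ}

/-- The Fourier–Laplace transform `z ↦ ∫ h(ξ) e^{i z·ξ} dξ` on `ℂ^ι`. Unlike in Mathlib's `𝓕`, the
phase carries no factor `-2π`, and `z·ξ = ∑ z_j ξ_j` is bilinear in the complex argument `z`. -/
noncomputable def fourierLaplace (h : (ι → ℝ) → ℂ) (z : ι → ℂ) : ℂ :=
  ∫ ξ, h ξ * cexp (I * ∑ j, z j * (ξ j : ℂ))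

theorem fourierLaplace_eq_zero_of_not_aestronglyMeasurable (hh : ¬AEStronglyMeasurable h)
    (z : ι → ℂ) : fourierLaplace h z = 0 :=
  integral_undef fun h_int ↦ hh <| aestronglyMeasurable_of_mul_continuous_ne_zero
    h_int.aestronglyMeasurable (by fun_prop) fun _ ↦ exp_ne_zero _

theorem stronglyMeasurable_fourierLaplace (h : (ι → ℝ) → ℂ) :
    StronglyMeasurable (fourierLaplace h) := by
  by_cases hh : AEStronglyMeasurable h
  · have h_mk : fourierLaplace h = fourierLaplace (hh.mk h) := by
      ext z
      refine integral_congr_ae ?_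
      filter_upwards [hh.ae_eq_mk] with ξ hξ
      rw [hξ]
    rw [h_mk]
    have h_phase : Continuous fun q : (ι → ℂ) × (ι → ℝ) ↦ cexp (I * ∑ j, q.1 j * (q.2 j : ℂ)) := by
      fun_prop
    exact ((hh.stronglyMeasurable_mk.comp_measurable measurable_snd).mul
      h_phase.stronglyMeasurable).integral_prod_right'
  · rw [funext (fourierLaplace_eq_zero_of_not_aestronglyMeasurable hh)]
    exact stronglyMeasurable_const

theorem fourierLaplace_ofReal_eq_fourier (h : (ι → ℝ) → ℂ) (x : ι → ℝ) :
    fourierLaplace h (fun j ↦ x j) =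
      𝓕 (h ∘ WithLp.ofLp : EuclideanSpace ℝ ι → ℂ) (WithLp.toLp 2 (-(2 * Real.pi)⁻¹ • x)) := by
  rw [Real.fourier_eq', ← (PiLp.volume_preserving_toLp ι).integral_comp
    (MeasurableEquiv.toLp 2 _).measurableEmbedding]
  refine integral_congr_ae (.of_forall fun ξ ↦ ?_)
  have h_inner : -2 * Real.pi * inner ℝ (WithLp.toLp 2 ξ) (WithLp.toLp 2 (-(2 * Real.pi)⁻¹ • x)) =
      ∑ j, x j * ξ j := by
    rw [WithLp.toLp_smul, real_inner_smul_right, PiLp.inner_apply]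
    simp only [RCLike.inner_apply, conj_trivial]
    field_simp
  simp only [h_inner, smul_eq_mul, Function.comp_apply]
  push_cast
  ring_nf

theorem lintegral_enorm_fourierLaplace_ofReal_sq (hh : Integrable h) (hh₂ : MemLp h 2) :
    ∫⁻ x : ι → ℝ, ‖fourierLaplace h (fun j ↦ x j)‖ₑ ^ 2 =
      ENNReal.ofReal ((2 * Real.pi) ^ Fintype.card ι) * ∫⁻ ξ, ‖h ξ‖ₑ ^ 2 := by
  have h_toLp := PiLp.volume_preserving_toLp ι
  have h_ofLp := PiLp.volume_preserving_ofLp ι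
  have h_emb := (MeasurableEquiv.toLp 2 (ι → ℝ)).measurableEmbedding
  set g : EuclideanSpace ℝ ι → ℂ := h ∘ WithLp.ofLp
  have h_scale : -(2 * Real.pi)⁻¹ ≠ 0 := neg_ne_zero.2 (inv_ne_zero Real.two_pi_pos.ne')
  have h_jac : |((-(2 * Real.pi)⁻¹) ^ Module.finrank ℝ (ι → ℝ))⁻¹| =
      (2 * Real.pi) ^ Fintype.card ι := by
    rw [Module.finrank_fintype_fun_eq_card, abs_inv, abs_pow, abs_neg, abs_inv, inv_pow, inv_inv,
      abs_of_pos Real.two_pi_pos]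
  simp_rw [fourierLaplace_ofReal_eq_fourier]
  rw [lintegral_comp_const_smul volume (fun x ↦ ‖𝓕 g (WithLp.toLp 2 x)‖ₑ ^ 2) h_scale, h_jac]
  congr 1
  calc ∫⁻ x : ι → ℝ, ‖𝓕 g (WithLp.toLp 2 x)‖ₑ ^ 2
    _ = ∫⁻ w, ‖𝓕 g w‖ₑ ^ 2 := h_toLp.lintegral_comp_emb h_emb fun w ↦ ‖𝓕 g w‖ₑ ^ 2
    _ = ∫⁻ v, ‖g v‖ₑ ^ 2 :=
        lintegral_enorm_fourier_sq (h_ofLp.integrable_comp_of_integrable hh)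
          (hh₂.comp_measurePreserving h_ofLp)
    _ = ∫⁻ ξ, ‖h ξ‖ₑ ^ 2 := (h_toLp.lintegral_comp_emb h_emb fun v ↦ ‖g v‖ₑ ^ 2).symm

theorem fourierLaplace_add_I_mul (h : (ι → ℝ) → ℂ) (x y : ι → ℝ) :
    fourierLaplace h (fun j ↦ x j + I * y j) =
      fourierLaplace (fun ξ ↦ h ξ * (Real.exp (∑ j, -y j * ξ j) : ℂ)) fun j ↦ x j := by
  refine integral_congr_ae (.of_forall fun ξ ↦ ?_)
  have h_phase : I * ∑ j, (x j + I * y j) * (ξ j : ℂ) =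
      ((∑ j, -y j * ξ j : ℝ) : ℂ) + I * ∑ j, (x j : ℂ) * ξ j := by
    push_cast
    simp only [Finset.mul_sum, ← Finset.sum_add_distrib]
    refine Finset.sum_congr rfl fun j _ ↦ ?_
    linear_combination (y j * ξ j : ℂ) * I_sq
  simp only [h_phase, Complex.exp_add, ofReal_exp, mul_assoc]

theorem lintegral_enorm_fourierLaplace_add_I_mul_sq {a : ℝ} (ha : 0 < a)
    (hh : MemLp (fun ξ ↦ h ξ * (Real.exp (a * ∑ j, ξ j ^ 2) : ℂ)) 2) (y : ι → ℝ) :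
    ∫⁻ x : ι → ℝ, ‖fourierLaplace h (fun j ↦ x j + I * y j)‖ₑ ^ 2 =
      ENNReal.ofReal ((2 * Real.pi) ^ Fintype.card ι) *
        ∫⁻ ξ, ‖h ξ‖ₑ ^ 2 * ENNReal.ofReal (Real.exp (2 * ∑ j, -y j * ξ j)) := by
  simp_rw [fourierLaplace_add_I_mul, ← enorm_mul_ofReal_exp_sq]
  exact lintegral_enorm_fourierLaplace_ofReal_sq (integrable_mul_exp_sum ha hh _)
    (memLp_two_mul_exp_sum ha hh _)

theorem lintegral_gaussian_mul_exp_sum (hb : 0 < b) (ξ : ι → ℝ) :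
    ∫⁻ y : ι → ℝ, ENNReal.ofReal (Real.exp (2 * ∑ j, -y j * ξ j)) *
        ENNReal.ofReal (Real.exp (-b * ∑ j, y j ^ 2)) =
      ENNReal.ofReal ((Real.pi / b) ^ (Fintype.card ι / 2 : ℝ)) *
        ENNReal.ofReal (Real.exp (2 * ((2 * b)⁻¹ * ∑ j, ξ j ^ 2))) := by
  have h_exponent (y : ι → ℝ) : 2 * ∑ j, -y j * ξ j + -b * ∑ j, y j ^ 2 =
      -b * ∑ j, y j ^ 2 + ∑ j, -2 * ξ j * y j := by
    rw [add_comm, Finset.mul_sum Finset.univ fun j ↦ -y j * ξ j]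
    refine congrArg _ (Finset.sum_congr rfl fun j _ ↦ ?_)
    ring
  have h_value : (∑ j, (-2 * ξ j) ^ 2) / (4 * b) = 2 * ((2 * b)⁻¹ * ∑ j, ξ j ^ 2) := by
    simp only [mul_pow, ← Finset.mul_sum]
    field
  simp_rw [← ENNReal.ofReal_mul (Real.exp_pos _).le, ← Real.exp_add, h_exponent]
  rw [lintegral_exp_neg_mul_sum_sq_add hb, h_value]

theorem lintegral_enorm_fourierLaplace_sq_mul_gaussian (hb : 0 < b)
    (hh : MemLp (fun ξ ↦ h ξ * (Real.exp ((2 * b)⁻¹ * ∑ j, ξ j ^ 2) : ℂ)) 2) :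
    ∫⁻ p : (ι → ℝ) × (ι → ℝ), ‖fourierLaplace h (fun j ↦ p.1 j + I * p.2 j)‖ₑ ^ 2 *
        ENNReal.ofReal (Real.exp (-b * ∑ j, p.2 j ^ 2)) =
      ENNReal.ofReal ((2 * Real.pi) ^ Fintype.card ι) *
        (ENNReal.ofReal ((Real.pi / b) ^ (Fintype.card ι / 2 : ℝ)) *
          ∫⁻ ξ, ‖h ξ * (Real.exp ((2 * b)⁻¹ * ∑ j, ξ j ^ 2) : ℂ)‖ₑ ^ 2) := by
  have hh_meas : AEStronglyMeasurable h := aestronglyMeasurable_of_mul_continuous_ne_zero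
    hh.aestronglyMeasurable (by fun_prop) fun _ ↦ ofReal_ne_zero.2 (Real.exp_ne_zero _)
  have hF_meas := (stronglyMeasurable_fourierLaplace h).measurable
  set A := ENNReal.ofReal ((2 * Real.pi) ^ Fintype.card ι)
  set B := ENNReal.ofReal ((Real.pi / b) ^ (Fintype.card ι / 2 : ℝ))
  calc ∫⁻ p : (ι → ℝ) × (ι → ℝ), ‖fourierLaplace h (fun j ↦ p.1 j + I * p.2 j)‖ₑ ^ 2 *
        ENNReal.ofReal (Real.exp (-b * ∑ j, p.2 j ^ 2))
    _ = ∫⁻ y : ι → ℝ, (∫⁻ x : ι → ℝ, ‖fourierLaplace h (fun j ↦ x j + I * y j)‖ₑ ^ 2) *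
          ENNReal.ofReal (Real.exp (-b * ∑ j, y j ^ 2)) := by
        rw [Measure.volume_eq_prod, lintegral_prod_symm' _ (by fun_prop)]
        simp_rw [lintegral_mul_const' _ _ ENNReal.ofReal_ne_top]
    _ = A * ∫⁻ y : ι → ℝ, ∫⁻ ξ, ‖h ξ‖ₑ ^ 2 * (ENNReal.ofReal (Real.exp (2 * ∑ j, -y j * ξ j)) *
          ENNReal.ofReal (Real.exp (-b * ∑ j, y j ^ 2))) := by
        rw [← lintegral_const_mul' _ _ ENNReal.ofReal_ne_top]
        refine lintegral_congr fun y ↦ ?_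
        rw [lintegral_enorm_fourierLaplace_add_I_mul_sq (by positivity) hh, mul_assoc,
          ← lintegral_mul_const' _ _ ENNReal.ofReal_ne_top]
        simp_rw [mul_assoc]
    _ = A * ∫⁻ ξ, ‖h ξ‖ₑ ^ 2 * ∫⁻ y : ι → ℝ, ENNReal.ofReal (Real.exp (2 * ∑ j, -y j * ξ j)) *
          ENNReal.ofReal (Real.exp (-b * ∑ j, y j ^ 2)) := by
        rw [lintegral_lintegral_swap]
        · simp_rw [lintegral_const_mul' _ _ (ENNReal.pow_ne_top enorm_ne_top)]
        · have h_exp : Measurable fun q : (ι → ℝ) × (ι → ℝ) ↦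
              ENNReal.ofReal (Real.exp (2 * ∑ j, -q.1 j * q.2 j)) *
                ENNReal.ofReal (Real.exp (-b * ∑ j, q.1 j ^ 2)) := by fun_prop
          exact (hh_meas.comp_snd.enorm.pow_const 2).mul h_exp.aemeasurable
    _ = A * (B * ∫⁻ ξ, ‖h ξ * (Real.exp ((2 * b)⁻¹ * ∑ j, ξ j ^ 2) : ℂ)‖ₑ ^ 2) := by
        simp_rw [lintegral_gaussian_mul_exp_sum hb, enorm_mul_ofReal_exp_sq, mul_left_comm (_ ^ 2),
          lintegral_const_mul' _ _ ENNReal.ofReal_ne_top]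
        rfl

theorem integrable_norm_fourierLaplace_sq_mul_gaussian (hb : 0 < b)
    (hh : MemLp (fun ξ ↦ h ξ * (Real.exp ((2 * b)⁻¹ * ∑ j, ξ j ^ 2) : ℂ)) 2) :
    Integrable fun p : (ι → ℝ) × (ι → ℝ) ↦
      ‖fourierLaplace h (fun j ↦ p.1 j + I * p.2 j)‖ ^ 2 * Real.exp (-b * ∑ j, p.2 j ^ 2) := by
  have hF_meas := (stronglyMeasurable_fourierLaplace h).measurable
  refine ⟨Measurable.aestronglyMeasurable (by fun_prop), ?_⟩
  rw [hasFiniteIntegral_iff_enorm]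
  simp_rw [enorm_mul, enorm_pow, enorm_norm, Real.enorm_of_nonneg (Real.exp_pos _).le]
  rw [lintegral_enorm_fourierLaplace_sq_mul_gaussian hb hh]
  refine ENNReal.mul_lt_top ENNReal.ofReal_lt_top (ENNReal.mul_lt_top ENNReal.ofReal_lt_top ?_)
  simpa using lintegral_rpow_enorm_lt_top_of_eLpNorm_lt_top two_ne_zero ENNReal.ofNat_ne_top
    hh.eLpNorm_lt_top

end FourierLaplace

section GaussBargmann

variable {ι : Type*} [Fintype ι]

/-- The Gauss–Bargmann transform `z ↦ e^{z²/4} ∫ f(ξ) e^{-|ξ|²} e^{i z·ξ} dξ`, the paper's `φ = G f`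
with `f` in the place of `f̂`. Here `z² = ∑ z_j²` is complex, not `|z|²`. -/
noncomputable def gaussBargmann (f : (ι → ℝ) → ℂ) (z : ι → ℂ) : ℂ :=
  cexp ((∑ j, z j ^ 2) / 4) *
    fourierLaplace (fun ξ ↦ f ξ * (Real.exp (-∑ j, ξ j ^ 2) : ℂ)) z

theorem gaussBargmann_eq_zero_of_not_aestronglyMeasurable {f : (ι → ℝ) → ℂ}
    (hf : ¬AEStronglyMeasurable f) (z : ι → ℂ) : gaussBargmann f z = 0 := by
  refine mul_eq_zero_of_right _ (fourierLaplace_eq_zero_of_not_aestronglyMeasurable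
    (fun h_meas ↦ hf ?_) z)
  exact aestronglyMeasurable_of_mul_continuous_ne_zero h_meas (by fun_prop)
    fun _ ↦ ofReal_ne_zero.2 (Real.exp_ne_zero _)

theorem norm_cexp_sum_sq_div_four_sq (x y : ι → ℝ) :
    ‖cexp ((∑ j, (x j + I * y j) ^ 2) / 4)‖ ^ 2 =
      Real.exp ((∑ j, x j ^ 2 - ∑ j, y j ^ 2) / 2) := by
  have h_re : ((∑ j, (x j + I * y j) ^ 2) / 4).re = (∑ j, x j ^ 2 - ∑ j, y j ^ 2) / 4 := by
    rw [show (4 : ℂ) = (4 : ℝ) from rfl, div_ofReal_re, re_sum, ← Finset.sum_sub_distrib]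
    simp [sq]
  rw [norm_exp, h_re, ← Real.exp_nat_mul]
  ring_nf

theorem norm_gaussBargmann_sq_mul_gaussian (f : (ι → ℝ) → ℂ) (x y : ι → ℝ) :
    ‖gaussBargmann f (fun j ↦ x j + I * y j)‖ ^ 2 *
        Real.exp (-(∑ j, x j ^ 2 + ∑ j, y j ^ 2) / 2) =
      ‖fourierLaplace (fun ξ ↦ f ξ * (Real.exp (-∑ j, ξ j ^ 2) : ℂ)) (fun j ↦ x j + I * y j)‖ ^ 2 *
        Real.exp (-∑ j, y j ^ 2) := by
  rw [gaussBargmann, norm_mul, mul_pow, norm_cexp_sum_sq_div_four_sq, mul_right_comm,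
    ← Real.exp_add, mul_comm]
  congr 2
  ring

theorem gauss_bargmann_necessary_weighted_L2_general {f : (ι → ℝ) → ℂ} {t : ℝ} (ht : -(1 / 2) < t)
    (hf : MemLp (fun ξ ↦ f ξ * (Real.exp (-(1 / 2 - t) * ∑ j, ξ j ^ 2) : ℂ)) 2) :
    Integrable fun p : (ι → ℝ) × (ι → ℝ) ↦
      ‖gaussBargmann f (fun j ↦ p.1 j + I * p.2 j)‖ ^ 2 *
        Real.exp (-(∑ j, p.1 j ^ 2 + ∑ j, p.2 j ^ 2) / 2) *
        Real.exp (2 * t / (1 + 2 * t) * ∑ j, p.2 j ^ 2) := by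
  have hb : 0 < 1 + 2 * t := by linarith
  have h_weight (s : ℝ) : Real.exp (-s) * Real.exp (2 * t / (1 + 2 * t) * s) =
      Real.exp (-(1 + 2 * t)⁻¹ * s) := by
    rw [← Real.exp_add]
    congr 1
    field
  have h_density (s : ℝ) : Real.exp (-s) * Real.exp ((2 * (1 + 2 * t)⁻¹)⁻¹ * s) =
      Real.exp (-(1 / 2 - t) * s) := by
    rw [← Real.exp_add]
    congr 1
    field
  simp_rw [norm_gaussBargmann_sq_mul_gaussian, mul_assoc, h_weight]
  refine integrable_norm_fourierLaplace_sq_mul_gaussian (inv_pos.2 hb) ?_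
  simp_rw [mul_assoc, ← ofReal_mul, h_density]
  exact hf

end GaussBargmann

/-- if `f̂ ∈ L^∞(ℝ^n)` and `φ = G f̂`, then for every `0 ≤ t < 1/2`
the integral `∫_{ℂ^n} |φ(x+iy)|² e^{-(|x|²+|y|²)/2} e^{(2t/(1+2t))|y|²} dx dy` is
finite. -/
theorem gauss_bargmann_necessary_weighted_L2
    (n : ℕ) (fhat : (Fin n → ℝ) → ℂ) (M : ℝ) (hf : ∀ ξ, ‖fhat ξ‖ ≤ M)
    (φ : (Fin n → ℂ) → ℂ)
    (hφ : ∀ z : Fin n → ℂ, φ z =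
      Complex.exp ((∑ j, (z j) ^ 2) / 4) *
        ∫ ξ : Fin n → ℝ, fhat ξ * (Real.exp (-∑ j, (ξ j) ^ 2) : ℂ) *
          Complex.exp (Complex.I * ∑ j, z j * (ξ j : ℂ)))
    (t : ℝ) (ht0 : 0 ≤ t) (ht : t < 1 / 2) :
    Integrable (fun p : (Fin n → ℝ) × (Fin n → ℝ) =>
      ‖φ (fun j => (p.1 j : ℂ) + Complex.I * (p.2 j : ℂ))‖ ^ 2 *
        Real.exp (-((∑ j, (p.1 j) ^ 2) + ∑ j, (p.2 j) ^ 2) / 2) *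
        Real.exp ((2 * t / (1 + 2 * t)) * ∑ j, (p.2 j) ^ 2)) := by
  obtain rfl : φ = gaussBargmann fhat := funext hφ
  by_cases hf_meas : AEStronglyMeasurable fhat
  · exact gauss_bargmann_necessary_weighted_L2_general (by linarith)
      (memLp_two_mul_gaussian (memLp_top_of_bound hf_meas M (.of_forall hf)) (by linarith))
  · -- The defining integral takes its default value `0`, so `φ` vanishes identically.
    simp [gaussBargmann_eq_zero_of_not_aestronglyMeasurable hf_meas]
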